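/- Let p : E ⥤ B be a Grothendieck fibration, let r : x ⟶ z be a strongly cartesian morphism of E, and let ℓ : y ⟶ z be a vertical morphism of E (i.e. p.map ℓ is an isomorphism). Then there exist an object w of E, a vertical morphism ℓ' : w ⟶ x, and a strongly cartesian morphism r' : w ⟶ y, such that ℓ' ≫ r = r' ≫ ℓ and this commutative square is a pullback square in E. -/

import Mathlib

open CategoryTheory CategoryTheory.Limits

universe v₁ v₂ u₁ u₂

/-!
Pull `r` back in two steps: take the pullback of `p.map r` and `p.map ℓ` in the base, and lift it to
`E` by choosing a cartesian morphism over its second projection. The lifted square is a pullback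
because the universal property of the base square supplies the base factorization of a cone, and the
two strongly cartesian sides turn it into a unique factorization in `E`. When `p.map ℓ` is an
isomorphism, so is the opposite side of the base square.
-/

section

open Functor

variable {B : Type u₁} {E : Type u₂} [Category.{v₁} B] [Category.{v₂} E] (p : E ⥤ B)
  {x y z : E}

theorem isPullback_of_isPullback_map_of_isStronglyCartesian {w : E} {ℓ' : w ⟶ x} {r' : w ⟶ y}
    {r : x ⟶ z} {ℓ : y ⟶ z}
    [p.IsStronglyCartesian (p.map r') r'] [p.IsStronglyCartesian (p.map r) r]
    (base : IsPullback (p.map ℓ') (p.map r') (p.map r) (p.map ℓ)) (comm : CommSq ℓ' r' r ℓ) :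
    IsPullback ℓ' r' r ℓ := by
  have map_condition (s : PullbackCone r ℓ) :
      p.map s.fst ≫ p.map r = p.map s.snd ≫ p.map ℓ := by
    simp only [← p.map_comp, s.condition]
  let baseLift (s : PullbackCone r ℓ) : p.obj s.pt ⟶ p.obj w :=
    base.lift (p.map s.fst) (p.map s.snd) (map_condition s)
  have baseLift_fst (s : PullbackCone r ℓ) : baseLift s ≫ p.map ℓ' = p.map s.fst :=
    base.lift_fst ..
  have baseLift_snd (s : PullbackCone r ℓ) : baseLift s ≫ p.map r' = p.map s.snd :=
    base.lift_snd ..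
  let lift (s : PullbackCone r ℓ) : s.pt ⟶ w :=
    IsStronglyCartesian.map p (p.map r') r' (baseLift_snd s).symm s.snd
  have lift_snd (s : PullbackCone r ℓ) : lift s ≫ r' = s.snd :=
    IsStronglyCartesian.fac ..
  refine ⟨comm, ⟨PullbackCone.IsLimit.mk _ lift (fun s ↦ ?_) lift_snd fun s m m_fst m_snd ↦ ?_⟩⟩
  · have : p.IsHomLift (p.map s.fst) (lift s ≫ ℓ') := by
      rw [← baseLift_fst s]
      infer_instance
    apply IsStronglyCartesian.ext p (p.map r) r (p.map s.fst)
    rw [Category.assoc, comm.w, reassoc_of% lift_snd s, s.condition]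
  · have map_m : p.map m = baseLift s := by
      apply base.hom_ext
      · rw [← p.map_comp, m_fst, baseLift_fst]
      · rw [← p.map_comp, m_snd, baseLift_snd]
    have : p.IsHomLift (baseLift s) m := map_m ▸ inferInstance
    exact IsStronglyCartesian.map_uniq p (p.map r') r' _ _ m m_snd

theorem exists_isStronglyCartesian_commSq [p.IsFibered] {S T U V : B} {g : S ⟶ T} {h : S ⟶ U}
    {f : T ⟶ V} {k : U ⟶ V} (base : CommSq g h f k) (r : x ⟶ z) (ℓ : y ⟶ z)
    [p.IsStronglyCartesian f r] [p.IsHomLift k ℓ] :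
    ∃ (w : E) (ℓ' : w ⟶ x) (r' : w ⟶ y),
      p.IsHomLift g ℓ' ∧ p.IsStronglyCartesian h r' ∧ CommSq ℓ' r' r ℓ := by
  obtain ⟨w, r', _⟩ := IsPreFibered.exists_isCartesian p (IsHomLift.domain_eq p k ℓ) h
  exact ⟨w, IsStronglyCartesian.map p f r base.w.symm (r' ≫ ℓ), r',
    inferInstance, inferInstance, ⟨IsStronglyCartesian.fac ..⟩⟩

theorem vert_cart_square_exists_general [p.IsFibered] (r : x ⟶ z) (ℓ : y ⟶ z)
    [p.IsStronglyCartesian (p.map r) r] [HasPullback (p.map r) (p.map ℓ)] :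
    ∃ (w : E) (ℓ' : w ⟶ x) (r' : w ⟶ y),
      IsPullback (p.map ℓ') (p.map r') (p.map r) (p.map ℓ) ∧
      p.IsStronglyCartesian (p.map r') r' ∧ IsPullback ℓ' r' r ℓ := by
  obtain ⟨S, g, h, base⟩ : ∃ (S : B) (g : S ⟶ p.obj x) (h : S ⟶ p.obj y),
      IsPullback g h (p.map r) (p.map ℓ) := ⟨_, _, _, .of_hasPullback _ _⟩
  obtain ⟨w, ℓ', r', _, _, comm⟩ := exists_isStronglyCartesian_commSq p base.toCommSq r ℓ
  obtain rfl := IsHomLift.domain_eq p g ℓ'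
  obtain rfl := IsHomLift.eq_of_isHomLift p g ℓ'
  obtain rfl := IsHomLift.eq_of_isHomLift p h r'
  exact ⟨w, ℓ', r', base, inferInstance,
    isPullback_of_isPullback_map_of_isStronglyCartesian p base comm⟩

end

/-- In a Grothendieck fibration `p : E ⥤ B`, a strongly cartesian morphism `r : x ⟶ z` and a
vertical morphism `ℓ : y ⟶ z` can be completed to a commutative square
`ℓ' ≫ r = r' ≫ ℓ` with `ℓ'` vertical and `r'` strongly cartesian, which is moreover a
pullback square in `E`. -/
theorem vert_cart_square_exists {B : Type u₁} {E : Type u₂}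
    [Category.{v₁} B] [Category.{v₂} E] (p : E ⥤ B) [p.IsFibered]
    {x y z : E} (r : x ⟶ z) (ℓ : y ⟶ z)
    (hr : p.IsStronglyCartesian (p.map r) r) (hℓ : IsIso (p.map ℓ)) :
    ∃ (w : E) (ℓ' : w ⟶ x) (r' : w ⟶ y),
      IsIso (p.map ℓ') ∧ p.IsStronglyCartesian (p.map r') r' ∧
      ℓ' ≫ r = r' ≫ ℓ ∧ IsPullback ℓ' r' r ℓ := by
  have := hasPullback_of_right_iso (p.map r) (p.map ℓ)
  obtain ⟨w, ℓ', r', base, hr', isPullback⟩ := vert_cart_square_exists_general p r ℓ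
  exact ⟨w, ℓ', r', base.isIso_fst_of_isIso, hr', isPullback.w, isPullback⟩
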